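/- Let G be an exchange network for which the LP relaxation of maximum weight matching admits a unique optimum, and this optimum is integral, corresponding to the matching M*. Then every Nash bargaining solution (M, γ_NB) of G has M = M*, and there exists a unique fixed point α of the natural dynamics update operator whose earnings vector γ equals γ_NB. -/

import Mathlib

namespace EN

open Finset

variable {V : Type*}

/-- The nonnegative part `(x)₊ = max (x, 0)`. -/
noncomputable def pos (x : ℝ) : ℝ := max x 0

variable [Fintype V] [DecidableEq V]

/-- The maximum of `f` over a finite set of vertices (`0` over the empty set). -/
noncomputable def fmax (s : Finset V) (f : V → ℝ) : ℝ := ⨆ k ∈ s, f k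

/-- The offer from `i` to `j` given messages `α` and weights `w`:
`m_{i→j} = (w_{ij} − α_{i\j})₊ − (1/2) (w_{ij} − α_{i\j} − α_{j\i})₊`. -/
noncomputable def offer (w α : V → V → ℝ) (i j : V) : ℝ :=
  pos (w i j - α i j) - (1 / 2) * pos (w i j - α i j - α j i)

/-- The update operator `T` of the natural dynamics:
`(Tα)_{i\j} = max_{k ∈ ∂i \ j} m_{k→i}`. -/
noncomputable def upd (G : SimpleGraph V) [DecidableRel G.Adj] (w α : V → V → ℝ)
    (i j : V) : ℝ :=
  fmax ((G.neighborFinset i).erase j) fun k => offer w α k i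

/-- The earnings estimate `γ_i = max_{k ∈ ∂i} m_{k→i}`. -/
noncomputable def earn (G : SimpleGraph V) [DecidableRel G.Adj] (w α : V → V → ℝ)
    (i : V) : ℝ :=
  fmax (G.neighborFinset i) fun k => offer w α k i

/-- Exchange network weights: symmetric and positive on every edge. -/
def GoodW (G : SimpleGraph V) (w : V → V → ℝ) : Prop :=
  (∀ i j, w i j = w j i) ∧ ∀ i j, G.Adj i j → 0 < w i j

/-- A valid message vector: nonnegative on all directed edges. -/
def ValidMsg (G : SimpleGraph V) (α : V → V → ℝ) : Prop :=
  ∀ i j, G.Adj i j → 0 ≤ α i j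

/-- Fixed point of the natural-dynamics update operator. -/
def IsFixedPt (G : SimpleGraph V) [DecidableRel G.Adj] (w α : V → V → ℝ) : Prop :=
  ∀ i j, G.Adj i j → upd G w α i j = α i j

/-- `ε`-fixed point. -/
def IsEpsFixedPt (G : SimpleGraph V) [DecidableRel G.Adj] (w α : V → V → ℝ) (ε : ℝ) : Prop :=
  ∀ i j, G.Adj i j → |α i j - upd G w α i j| ≤ ε

/-- The natural dynamics with damping factor `κ`: `α^{t+1} = (1−κ) α^t + κ T α^t`. -/
noncomputable def dyn (G : SimpleGraph V) [DecidableRel G.Adj] (w : V → V → ℝ) (κ : ℝ)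
    (α0 : V → V → ℝ) : ℕ → V → V → ℝ
  | 0 => α0
  | t + 1 => fun i j =>
      (1 - κ) * dyn G w κ α0 t i j + κ * upd G w (dyn G w κ α0 t) i j

/-- Sup norm over directed edges. -/
noncomputable def msgSup (G : SimpleGraph V) [DecidableRel G.Adj] (f : V → V → ℝ) : ℝ :=
  ⨆ p : V × V, if G.Adj p.1 p.2 then |f p.1 p.2| else 0

/-- `M` is a matching of `G`: a symmetric subrelation of adjacency pairing each node
with at most one partner. -/
structure IsMatching (G : SimpleGraph V) (M : V → V → Prop) : Prop where
  subset : ∀ i j, M i j → G.Adj i j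
  symm : ∀ i j, M i j → M j i
  unique : ∀ i j k, M i j → M i k → j = k

/-- `(M, γ)` is a trade outcome. -/
def IsOutcome (G : SimpleGraph V) (w : V → V → ℝ) (M : V → V → Prop) (γ : V → ℝ) : Prop :=
  IsMatching G M ∧ (∀ i, 0 ≤ γ i) ∧ (∀ i j, M i j → γ i + γ j = w i j) ∧
    ∀ i, (∀ j, ¬M i j) → γ i = 0

/-- Stability of an outcome. -/
def Stable (G : SimpleGraph V) (w : V → V → ℝ) (M : V → V → Prop) (γ : V → ℝ) : Prop :=
  ∀ i j, G.Adj i j → ¬M i j → w i j ≤ γ i + γ j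

/-- The best alternative of `i` excluding `j`: `max_{k ∈ ∂i \ j} (w_{ik} − γ_k)₊`. -/
noncomputable def bestAlt (G : SimpleGraph V) [DecidableRel G.Adj] (w : V → V → ℝ)
    (γ : V → ℝ) (i j : V) : ℝ :=
  fmax ((G.neighborFinset i).erase j) fun k => pos (w i k - γ k)

/-- Balance of an outcome. -/
def Balanced (G : SimpleGraph V) [DecidableRel G.Adj] (w : V → V → ℝ) (M : V → V → Prop)
    (γ : V → ℝ) : Prop :=
  ∀ i j, M i j → γ i - bestAlt G w γ i j = γ j - bestAlt G w γ j i

/-- Nash bargaining solution: a stable and balanced trade outcome. -/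
def IsNBSolution (G : SimpleGraph V) [DecidableRel G.Adj] (w : V → V → ℝ)
    (M : V → V → Prop) (γ : V → ℝ) : Prop :=
  IsOutcome G w M γ ∧ Stable G w M γ ∧ Balanced G w M γ

/-- `ε`-balance. -/
def EpsBalanced (G : SimpleGraph V) [DecidableRel G.Adj] (w : V → V → ℝ)
    (M : V → V → Prop) (γ : V → ℝ) (ε : ℝ) : Prop :=
  ∀ i j, M i j → |(γ i - bestAlt G w γ i j) - (γ j - bestAlt G w γ j i)| ≤ ε

/-- `ε`-Nash bargaining solution. -/
def IsEpsNB (G : SimpleGraph V) [DecidableRel G.Adj] (w : V → V → ℝ)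
    (M : V → V → Prop) (γ : V → ℝ) (ε : ℝ) : Prop :=
  IsOutcome G w M γ ∧ Stable G w M γ ∧ EpsBalanced G w M γ ε

/-- Feasible point of the LP relaxation of maximum weight matching. -/
def LPFeasible (G : SimpleGraph V) [DecidableRel G.Adj] (x : V → V → ℝ) : Prop :=
  (∀ i j, x i j = x j i) ∧ (∀ i j, 0 ≤ x i j) ∧ (∀ i j, ¬G.Adj i j → x i j = 0) ∧
    ∀ i, ∑ j ∈ G.neighborFinset i, x i j ≤ 1

/-- LP objective `Σ_{(i,j)∈E} w_{ij} x_{ij}` (each undirected edge counted once). -/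
noncomputable def LPval (G : SimpleGraph V) [DecidableRel G.Adj] (w x : V → V → ℝ) : ℝ :=
  (1 / 2) * ∑ i, ∑ j ∈ G.neighborFinset i, w i j * x i j

/-- Optimal point of the LP relaxation of maximum weight matching. -/
def LPOptimal (G : SimpleGraph V) [DecidableRel G.Adj] (w x : V → V → ℝ) : Prop :=
  LPFeasible G x ∧ ∀ y, LPFeasible G y → LPval G w y ≤ LPval G w x

def Integral (x : V → V → ℝ) : Prop := ∀ i j, x i j = 0 ∨ x i j = 1

def HalfIntegral (x : V → V → ℝ) : Prop := ∀ i j, x i j = 0 ∨ x i j = 1 / 2 ∨ x i j = 1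

open Classical in
/-- The LP point associated to a matching. -/
noncomputable def mInd (M : V → V → Prop) (i j : V) : ℝ := if M i j then 1 else 0

/-- The state with offers `m` induces the matching `M`: every node receiving a positive
offer is matched and receives its unique best offer from its partner, and every node
with zero earnings is unmatched. -/
def Induces (G : SimpleGraph V) [DecidableRel G.Adj] (m : V → V → ℝ)
    (M : V → V → Prop) : Prop :=
  IsMatching G M ∧
    (∀ i, (∃ k, G.Adj i k ∧ 0 < m k i) →
      ∃ j, M i j ∧ ∀ k, G.Adj i k → k ≠ j → m k i < m j i) ∧
    ∀ i, (fmax (G.neighborFinset i) fun k => m k i) = 0 → ∀ j, ¬M i j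

/-- Feasibility for the dual LP. -/
def DualFeasible (G : SimpleGraph V) (w : V → V → ℝ) (y : V → ℝ) : Prop :=
  (∀ i, 0 ≤ y i) ∧ ∀ i j, G.Adj i j → w i j ≤ y i + y j

/-- Optimality for the dual LP. -/
def DualOptimal (G : SimpleGraph V) (w : V → V → ℝ) (y : V → ℝ) : Prop :=
  DualFeasible G w y ∧ ∀ z, DualFeasible G w z → ∑ i, y i ≤ ∑ i, z i

/-- The unmatched balance property at every edge. -/
def UnmatchedBalance (G : SimpleGraph V) [DecidableRel G.Adj] (w : V → V → ℝ)
    (y : V → ℝ) : Prop :=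
  ∀ i j, G.Adj i j → y i - bestAlt G w y i j = y j - bestAlt G w y j i

/-! ### Unequal division -/

/-- Valid split fractions: `r_{ij} ∈ (0,1)` with `r_{ij} + r_{ji} = 1` on every edge. -/
def GoodR (G : SimpleGraph V) (r : V → V → ℝ) : Prop :=
  ∀ i j, G.Adj i j → 0 < r i j ∧ r i j < 1 ∧ r i j + r j i = 1

/-- The UD offer from `i` to `j`. -/
noncomputable def offerUD (w r α : V → V → ℝ) (i j : V) : ℝ :=
  pos (w i j - α i j) - r i j * pos (w i j - α i j - α j i)

/-- The UD update operator. -/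
noncomputable def updUD (G : SimpleGraph V) [DecidableRel G.Adj] (w r α : V → V → ℝ)
    (i j : V) : ℝ :=
  fmax ((G.neighborFinset i).erase j) fun k => offerUD w r α k i

/-- The UD earnings estimate. -/
noncomputable def earnUD (G : SimpleGraph V) [DecidableRel G.Adj] (w r α : V → V → ℝ)
    (i : V) : ℝ :=
  fmax (G.neighborFinset i) fun k => offerUD w r α k i

/-- Fixed point of the UD update operator. -/
def IsFixedPtUD (G : SimpleGraph V) [DecidableRel G.Adj] (w r α : V → V → ℝ) : Prop :=
  ∀ i j, G.Adj i j → updUD G w r α i j = α i j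

/-- Correct division. -/
def CorrectDiv (G : SimpleGraph V) [DecidableRel G.Adj] (w r : V → V → ℝ)
    (M : V → V → Prop) (γ : V → ℝ) : Prop :=
  ∀ i j, M i j →
    (1 / r i j) * (γ i - bestAlt G w γ i j) = (1 / r j i) * (γ j - bestAlt G w γ j i)

/-- UD solution: a stable trade outcome satisfying correct division. -/
def IsUDSolution (G : SimpleGraph V) [DecidableRel G.Adj] (w r : V → V → ℝ)
    (M : V → V → Prop) (γ : V → ℝ) : Prop :=
  IsOutcome G w M γ ∧ Stable G w M γ ∧ CorrectDiv G w r M γ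

/-- Edge surplus. -/
noncomputable def surp (G : SimpleGraph V) [DecidableRel G.Adj] (w : V → V → ℝ)
    (γ : V → ℝ) (i j : V) : ℝ :=
  w i j - bestAlt G w γ i j - bestAlt G w γ j i

open Classical in
/-- The rebalanced allocation `γ^reb`. -/
noncomputable def reb (G : SimpleGraph V) [DecidableRel G.Adj] (w r : V → V → ℝ)
    (M : V → V → Prop) (γ : V → ℝ) (i : V) : ℝ :=
  if h : ∃ j, M i j then
    bestAlt G w γ i h.choose + r i h.choose * surp G w γ i h.choose
  else 0

/-- The Edge Rebalancing iteration `γ^{t+1} = κ γ^reb(γ^t) + (1−κ) γ^t`. -/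
noncomputable def rebIter (G : SimpleGraph V) [DecidableRel G.Adj] (w r : V → V → ℝ)
    (M : V → V → Prop) (κ : ℝ) (γ0 : V → ℝ) : ℕ → V → ℝ
  | 0 => γ0
  | t + 1 => fun i =>
      κ * reb G w r M (rebIter G w r M κ γ0 t) i + (1 - κ) * rebIter G w r M κ γ0 t i

/-!
At a fixed point `α` with earnings `γ`, the offer over an edge is determined by `γ`:
`m_{j→i} = (w_{ij} − γ_j)₊`, whether or not the edge has a positive surplus
`w_{ij} − α_{i∖j} − α_{j∖i}`. Hence `α_{i∖j}` can only be the best alternative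
`max_{k ∈ ∂i∖j} (w_{ik} − γ_k)₊`, which gives uniqueness. Conversely, when `γ` is a Nash bargaining
solution, balance on the matched edges and stability on the others show that the best alternatives
produce exactly these offers, so they form a fixed point with earnings `γ`. The matching of a stable
outcome is an LP optimum because `γ` is a dual solution of the same value.
-/

section Pos

lemma pos_nonneg (x : ℝ) : 0 ≤ pos x := le_max_right x 0

lemma pos_of_nonneg {x : ℝ} (hx : 0 ≤ x) : pos x = x := max_eq_left hx

lemma pos_of_nonpos {x : ℝ} (hx : x ≤ 0) : pos x = 0 := max_eq_right hx

lemma pos_le_iff {x c : ℝ} : pos x ≤ c ↔ x ≤ c ∧ 0 ≤ c := max_le_iff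

lemma pos_mono : Monotone pos := fun _ _ hxy => max_le_max_right 0 hxy

end Pos

section Fmax

variable {V : Type*} {s : Finset V} {f g : V → ℝ}

lemma fmax_le {c : ℝ} (hc : 0 ≤ c) (h : ∀ k ∈ s, f k ≤ c) : fmax s f ≤ c :=
  Real.iSup_le (fun k => Real.iSup_le (h k) hc) hc

lemma le_fmax {k : V} (hk : k ∈ s) : f k ≤ fmax s f := by
  have hbdd : BddAbove (⋃ k, Set.range fun _ : k ∈ s => f k) := by
    refine (s.finite_toSet.image f).bddAbove.mono (Set.iUnion_subset fun k => ?_)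
    rintro _ ⟨hk, rfl⟩
    exact Set.mem_image_of_mem f hk
  exact le_ciSup₂ (f := fun k (_ : k ∈ s) => f k) hbdd k hk

lemma fmax_nonneg (h : ∀ k ∈ s, 0 ≤ f k) : 0 ≤ fmax s f :=
  Real.iSup_nonneg fun k => Real.iSup_nonneg (h k)

lemma fmax_congr (h : ∀ k ∈ s, f k = g k) : fmax s f = fmax s g :=
  iSup_congr fun k => iSup_congr (h k)

lemma fmax_eq_max_erase [DecidableEq V] (h : ∀ k ∈ s, 0 ≤ f k) {j : V} (hj : j ∈ s) :
    fmax s f = max (f j) (fmax (s.erase j) f) := by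
  apply le_antisymm
  · refine fmax_le (le_max_of_le_left (h j hj)) fun k hk => ?_
    obtain rfl | hkj := eq_or_ne k j
    · exact le_max_left _ _
    · exact le_max_of_le_right (le_fmax (Finset.mem_erase.2 ⟨hkj, hk⟩))
  · exact max_le (le_fmax hj)
      (fmax_le (fmax_nonneg h) fun k hk => le_fmax (Finset.mem_of_mem_erase hk))

end Fmax

section Offer

variable {V : Type*} {w α : V → V → ℝ} {i j : V}

lemma offer_nonneg (h : 0 ≤ α j i) : 0 ≤ offer w α i j := by
  have hle : pos (w i j - α i j - α j i) ≤ pos (w i j - α i j) := pos_mono (by linarith)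
  have hnonneg := pos_nonneg (w i j - α i j)
  unfold offer
  linarith

lemma offer_of_surplus_nonpos (h : w i j - α i j - α j i ≤ 0) :
    offer w α i j = pos (w i j - α i j) := by
  rw [offer, pos_of_nonpos h, mul_zero, sub_zero]

lemma offer_of_surplus_nonneg (h : 0 ≤ w i j - α i j - α j i) (hα : 0 ≤ α j i) :
    offer w α i j = (w i j - α i j + α j i) / 2 := by
  rw [offer, pos_of_nonneg h, pos_of_nonneg (by linarith)]
  ring

end Offer

section WeakDuality

variable {V : Type*} {G : SimpleGraph V} {w : V → V → ℝ} {M : V → V → Prop} {γ : V → ℝ}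

lemma IsOutcome.dualFeasible (hout : IsOutcome G w M γ) (hst : Stable G w M γ) :
    DualFeasible G w γ := by
  obtain ⟨-, hnonneg, hsplit, -⟩ := hout
  refine ⟨hnonneg, fun i j hij => ?_⟩
  by_cases hMij : M i j
  · exact (hsplit i j hMij).ge
  · exact hst i j hij hMij

lemma mInd_injective : Function.Injective (mInd : (V → V → Prop) → V → V → ℝ) := by
  intro M N h
  ext i j
  have hij : mInd M i j = mInd N i j := congrFun₂ h i j
  by_cases hM : M i j <;> by_cases hN : N i j <;> simp_all [mInd]

lemma IsMatching.mInd_comm (hM : IsMatching G M) (i j : V) : mInd M i j = mInd M j i := by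
  have hcomm : M i j ↔ M j i := ⟨hM.symm i j, hM.symm j i⟩
  by_cases hij : M i j <;> simp_all [mInd]

variable [Fintype V] [DecidableRel G.Adj]

lemma LPval_endpoint_sum {x : V → V → ℝ} (hx : ∀ i j, x i j = x j i) (y : V → ℝ) :
    LPval G (fun i j => y i + y j) x = ∑ i, y i * ∑ j ∈ G.neighborFinset i, x i j := by
  have hswap : ∑ i, ∑ j ∈ G.neighborFinset i, y j * x i j =
      ∑ i, ∑ j ∈ G.neighborFinset i, y i * x i j := by
    rw [Finset.sum_comm' (t' := Finset.univ) (s' := fun j => G.neighborFinset j)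
      (by simp [G.adj_comm])]
    simp only [hx]
  simp only [LPval, add_mul, Finset.sum_add_distrib, hswap, Finset.mul_sum]
  ring

lemma DualFeasible.LPval_le_sum (hγ : DualFeasible G w γ) {x : V → V → ℝ}
    (hx : LPFeasible G x) : LPval G w x ≤ ∑ i, γ i := by
  obtain ⟨hsymm, hnonneg, -, hdeg⟩ := hx
  calc LPval G w x ≤ LPval G (fun i j => γ i + γ j) x := by
        unfold LPval
        gcongr with i _ j hj
        · exact hnonneg i j
        · exact hγ.2 i j (by simpa using hj)
    _ = ∑ i, γ i * ∑ j ∈ G.neighborFinset i, x i j := LPval_endpoint_sum hsymm γ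
    _ ≤ ∑ i, γ i := Finset.sum_le_sum fun i _ => mul_le_of_le_one_right (hγ.1 i) (hdeg i)

lemma IsMatching.sum_mInd_of_matched (hM : IsMatching G M) {i j : V} (hij : M i j) :
    ∑ k ∈ G.neighborFinset i, mInd M i k = 1 := by
  rw [Finset.sum_eq_single_of_mem j (by simpa using hM.subset i j hij)]
  · simp [mInd, hij]
  · intro k _ hkj
    exact if_neg fun hik => hkj (hM.unique i k j hik hij)

lemma sum_mInd_of_unmatched {i : V} (hi : ∀ j, ¬M i j) :
    ∑ k ∈ G.neighborFinset i, mInd M i k = 0 :=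
  Finset.sum_eq_zero fun k _ => if_neg (hi k)

lemma IsMatching.lpFeasible_mInd (hM : IsMatching G M) : LPFeasible G (mInd M) := by
  refine ⟨hM.mInd_comm, fun i j => ?_, fun i j hij => if_neg (mt (hM.subset i j) hij),
    fun i => ?_⟩
  · unfold mInd
    split_ifs <;> norm_num
  · by_cases hi : ∃ j, M i j
    · obtain ⟨j, hij⟩ := hi
      exact (hM.sum_mInd_of_matched hij).le
    · exact (sum_mInd_of_unmatched (not_exists.1 hi)).le.trans zero_le_one

lemma IsOutcome.LPval_mInd (hout : IsOutcome G w M γ) : LPval G w (mInd M) = ∑ i, γ i := by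
  obtain ⟨hM, -, hsplit, hunmatched⟩ := hout
  have hweight (i j : V) : w i j * mInd M i j = (γ i + γ j) * mInd M i j := by
    by_cases hij : M i j
    · rw [hsplit i j hij]
    · simp [mInd, hij]
  calc LPval G w (mInd M) = LPval G (fun i j => γ i + γ j) (mInd M) := by
        simp only [LPval, hweight]
    _ = ∑ i, γ i * ∑ j ∈ G.neighborFinset i, mInd M i j := LPval_endpoint_sum hM.mInd_comm γ
    _ = ∑ i, γ i := Finset.sum_congr rfl fun i _ => by
        by_cases hi : ∃ j, M i j
        · obtain ⟨j, hij⟩ := hi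
          rw [hM.sum_mInd_of_matched hij, mul_one]
        · rw [hunmatched i (not_exists.1 hi), zero_mul]

theorem IsOutcome.lpOptimal_mInd (hout : IsOutcome G w M γ) (hst : Stable G w M γ) :
    LPOptimal G w (mInd M) :=
  ⟨hout.1.lpFeasible_mInd, fun _ hy =>
    ((hout.dualFeasible hst).LPval_le_sum hy).trans hout.LPval_mInd.ge⟩

end WeakDuality

section FixedPoint

variable {V : Type*} [Fintype V] [DecidableEq V] {G : SimpleGraph V} [DecidableRel G.Adj]
  {w α : V → V → ℝ}

lemma ValidMsg.earn_eq_max (hα : ValidMsg G α) {i j : V} (hij : G.Adj i j) :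
    earn G w α i = max (offer w α j i) (upd G w α i j) :=
  fmax_eq_max_erase (fun k hk => offer_nonneg (hα i k (by simpa using hk))) (by simpa using hij)

lemma IsFixedPt.offer_eq_pos_sub_earn (hw : ∀ i j, w i j = w j i) (hfix : IsFixedPt G w α)
    (hα : ValidMsg G α) {i j : V} (hij : G.Adj i j) :
    offer w α j i = pos (w i j - earn G w α j) := by
  have hearn : earn G w α j = max (offer w α i j) (α j i) := by
    rw [hα.earn_eq_max hij.symm, hfix j i hij.symm]
  have hαij := hα i j hij
  have hαji := hα j i hij.symm
  obtain hsurplus | hsurplus := le_total (w i j - α i j - α j i) 0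
  · have hle : offer w α i j ≤ α j i := by
      rw [offer_of_surplus_nonpos hsurplus, pos_le_iff]
      exact ⟨by linarith, hαji⟩
    rw [hearn, max_eq_right hle, offer_of_surplus_nonpos (by linarith [hw i j]), hw j i]
  · have hoffer := offer_of_surplus_nonneg hsurplus hαji
    rw [hearn, max_eq_left (by linarith), hoffer, pos_of_nonneg (by linarith),
      offer_of_surplus_nonneg (by linarith [hw i j]) hαij, hw j i]
    ring

theorem IsFixedPt.eq_bestAlt (hw : ∀ i j, w i j = w j i) (hfix : IsFixedPt G w α)
    (hα : ValidMsg G α) {i j : V} (hij : G.Adj i j) :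
    α i j = bestAlt G w (earn G w α) i j := by
  rw [← hfix i j hij]
  exact fmax_congr fun k hk =>
    hfix.offer_eq_pos_sub_earn hw hα (by simpa using Finset.mem_of_mem_erase hk)

end FixedPoint

section BestAlternative

variable {V : Type*} [Fintype V] {G : SimpleGraph V} [DecidableRel G.Adj]
  {w : V → V → ℝ} {M : V → V → Prop} {γ : V → ℝ} {i j : V}

lemma DualFeasible.fmax_pos_sub_le (hγ : DualFeasible G w γ) {s : Finset V}
    (hs : s ⊆ G.neighborFinset i) : fmax s (fun k => pos (w i k - γ k)) ≤ γ i := by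
  refine fmax_le (hγ.1 i) fun k hk => pos_le_iff.2 ⟨?_, hγ.1 i⟩
  linarith [hγ.2 i k (by simpa using hs hk)]

lemma IsOutcome.fmax_pos_sub_eq (hout : IsOutcome G w M γ) (hst : Stable G w M γ) {s : Finset V}
    (hs : s ⊆ G.neighborFinset i) (hpartner : ∀ k, M i k → k ∈ s) :
    fmax s (fun k => pos (w i k - γ k)) = γ i := by
  refine ((hout.dualFeasible hst).fmax_pos_sub_le hs).antisymm ?_
  obtain ⟨-, hnonneg, hsplit, hunmatched⟩ := hout
  by_cases hi : ∃ k, M i k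
  · obtain ⟨k, hik⟩ := hi
    calc γ i = pos (w i k - γ k) := by
          rw [← hsplit i k hik, add_sub_cancel_right, pos_of_nonneg (hnonneg i)]
      _ ≤ fmax s (fun k => pos (w i k - γ k)) :=
          le_fmax (f := fun k => pos (w i k - γ k)) (hpartner k hik)
  · rw [hunmatched i (not_exists.1 hi)]
    exact fmax_nonneg fun k _ => pos_nonneg _

variable [DecidableEq V]

lemma bestAlt_nonneg : 0 ≤ bestAlt G w γ i j :=
  fmax_nonneg fun _ _ => pos_nonneg _

lemma DualFeasible.bestAlt_le (hγ : DualFeasible G w γ) : bestAlt G w γ i j ≤ γ i :=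
  hγ.fmax_pos_sub_le (Finset.erase_subset _ _)

lemma IsOutcome.bestAlt_eq_of_not_matched (hout : IsOutcome G w M γ) (hst : Stable G w M γ)
    (hij : ¬M i j) : bestAlt G w γ i j = γ i := by
  refine hout.fmax_pos_sub_eq hst (Finset.erase_subset _ _) fun k hik => Finset.mem_erase.2 ⟨?_, ?_⟩
  · rintro rfl
    exact hij hik
  · simpa using hout.1.subset i k hik

lemma IsNBSolution.offer_bestAlt (hw : ∀ i j, w i j = w j i) (hNB : IsNBSolution G w M γ)
    (hij : G.Adj i j) : offer w (bestAlt G w γ) j i = pos (w i j - γ j) := by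
  obtain ⟨hout, hst, hbal⟩ := hNB
  have hγ := hout.dualFeasible hst
  by_cases hMij : M i j
  · have hsplit : γ i + γ j = w i j := hout.2.2.1 i j hMij
    have hbalance := hbal i j hMij
    have hle : bestAlt G w γ i j ≤ γ i := hγ.bestAlt_le
    rw [offer_of_surplus_nonneg (by linarith [hw i j]) bestAlt_nonneg,
      pos_of_nonneg (by linarith [hγ.1 i])]
    linarith [hw i j]
  · have hi := hout.bestAlt_eq_of_not_matched hst hMij
    have hj := hout.bestAlt_eq_of_not_matched hst (mt (hout.1.symm j i) hMij)
    rw [offer_of_surplus_nonpos (by linarith [hγ.2 i j hij, hw i j]), hj, hw j i]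

theorem IsNBSolution.isFixedPt_bestAlt (hw : ∀ i j, w i j = w j i)
    (hNB : IsNBSolution G w M γ) : IsFixedPt G w (bestAlt G w γ) := fun _ _ _ =>
  fmax_congr fun _ hk => hNB.offer_bestAlt hw (by simpa using Finset.mem_of_mem_erase hk)

theorem IsNBSolution.earn_bestAlt (hw : ∀ i j, w i j = w j i)
    (hNB : IsNBSolution G w M γ) : earn G w (bestAlt G w γ) = γ := by
  funext i
  calc earn G w (bestAlt G w γ) i
      = fmax (G.neighborFinset i) fun k => pos (w i k - γ k) :=
        fmax_congr fun k hk => hNB.offer_bestAlt hw (by simpa using hk)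
    _ = γ i := hNB.1.fmax_pos_sub_eq hNB.2.1 subset_rfl fun k hik => by
        simpa using hNB.1.1.subset i k hik

end BestAlternative

theorem NB_gives_unique_fixedPoint_general
    {V : Type*} [Fintype V] [DecidableEq V] {G : SimpleGraph V} [DecidableRel G.Adj]
    {w : V → V → ℝ} (hw : ∀ i j, w i j = w j i)
    {M : V → V → Prop} {γNB : V → ℝ} (hNB : IsNBSolution G w M γNB) :
    LPOptimal G w (mInd M) ∧
      ∃ α : V → V → ℝ, ValidMsg G α ∧ IsFixedPt G w α ∧ (∀ i, earn G w α i = γNB i) ∧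
        ∀ α' : V → V → ℝ, ValidMsg G α' → IsFixedPt G w α' →
          (∀ i, earn G w α' i = γNB i) → ∀ i j, G.Adj i j → α' i j = α i j := by
  refine ⟨hNB.1.lpOptimal_mInd hNB.2.1, bestAlt G w γNB, fun _ _ _ => bestAlt_nonneg,
    hNB.isFixedPt_bestAlt hw, congrFun (hNB.earn_bestAlt hw), ?_⟩
  intro α' hα' hfix hearn i j hij
  rw [hfix.eq_bestAlt hw hα' hij, funext hearn]

/-- If the LP relaxation of maximum weight matching has a unique
optimum, which is integral and corresponds to the matching `M*`, then every Nash
bargaining solution `(M, γ_NB)` has `M = M*` and corresponds to a unique fixed point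
of the natural dynamics whose earnings vector equals `γ_NB`. -/
theorem NB_gives_unique_fixedPoint
    {V : Type*} [Fintype V] [DecidableEq V] (G : SimpleGraph V) [DecidableRel G.Adj]
    (w : V → V → ℝ) (hw : GoodW G w)
    (Mstar : V → V → Prop) (hM : IsMatching G Mstar)
    (hopt : LPOptimal G w (mInd Mstar))
    (huniq : ∀ x, LPOptimal G w x → x = mInd Mstar)
    (M : V → V → Prop) (γNB : V → ℝ) (hNB : IsNBSolution G w M γNB) :
    M = Mstar ∧
      ∃ α : V → V → ℝ, ValidMsg G α ∧ IsFixedPt G w α ∧ (∀ i, earn G w α i = γNB i) ∧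
        ∀ α' : V → V → ℝ, ValidMsg G α' → IsFixedPt G w α' →
          (∀ i, earn G w α' i = γNB i) → ∀ i j, G.Adj i j → α' i j = α i j := by
  obtain ⟨hMopt, hfix⟩ := NB_gives_unique_fixedPoint_general hw.1 hNB
  exact ⟨mInd_injective (huniq _ hMopt), hfix⟩

end EN
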